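/- Fix μ ∈ ℝ. For every k ≥ 1, all roots of the polynomial λ ↦ G_k(λ,μ) are real and simple. -/

import Mathlib

open Polynomial

/-- `G_k(λ,μ)` as a polynomial in `λ` over `ℂ`, for fixed real `μ`:
`G_0 = 1`, `G_1 = μ - λ`, `G_{k+1} = (-λ-μ)G_k - 4G_{k-1}`. -/
noncomputable def Gpoly (μ : ℝ) : ℕ → Polynomial ℂ
  | 0 => 1
  | 1 => C (μ : ℂ) - X
  | (k + 2) => (-X - C (μ : ℂ)) * Gpoly μ (k + 1) - 4 * Gpoly μ k

/-!
Up to the sign `(-1)^k`, the `G_k` are the monic polynomials `P_k` of a Jacobi matrix with real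
diagonal and positive weights. If `z` is a root of `P_{n+1}`, the Christoffel–Darboux identity
reads `P_n(z) P_{n+1}(x) = (x - z) K_n(x, z)`. Since `K_n(conj z, z)` is a positive combination of
the `|P_k(z)|²` with `P_0 = 1`, it does not vanish. As `conj z` is a root too, taking `x = conj z`
forces `conj z = z`; then `K_n(z, z) ≠ 0` says that `x - z` divides `P_{n+1}` only once.
-/

section CommRing

variable {R : Type*} [CommRing R]

/-- The monic polynomials of the Jacobi matrix with diagonal `b`, where `c n` is the product of the
two off-diagonal entries coupling the sites `n` and `n + 1`; when `b` is real and `c` is positive,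
these are the monic orthogonal polynomials of the spectral measure. -/
noncomputable def orthoPoly (b c : ℕ → R) : ℕ → R[X]
  | 0 => 1
  | 1 => X - C (b 0)
  | n + 2 => (X - C (b (n + 1))) * orthoPoly b c (n + 1) - C (c n) * orthoPoly b c n

/-- The Christoffel–Darboux kernel `x ↦ K_n(x, y)` of `orthoPoly b c`, with the normalization
`K_n(x, y) = ∑ k ≤ n, c_k ⋯ c_{n-1} P_k(x) P_k(y)`, which avoids dividing by the `c_k`. -/
noncomputable def kernelPoly (b c : ℕ → R) (y : R) : ℕ → R[X]
  | 0 => 1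
  | n + 1 => C ((orthoPoly b c (n + 1)).eval y) * orthoPoly b c (n + 1) +
      C (c n) * kernelPoly b c y n

theorem christoffel_darboux (b c : ℕ → R) (y : R) (n : ℕ) :
    C ((orthoPoly b c n).eval y) * orthoPoly b c (n + 1) -
      C ((orthoPoly b c (n + 1)).eval y) * orthoPoly b c n = (X - C y) * kernelPoly b c y n := by
  induction n with
  | zero => simp [orthoPoly, kernelPoly]
  | succ n ih =>
    simp only [orthoPoly, kernelPoly, eval_sub, eval_mul, eval_X, eval_C, C_sub, C_mul]
    linear_combination C (c n) * ih

variable {b c : ℕ → R} {z : R} {n : ℕ}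

theorem mul_orthoPoly_succ_of_isRoot (hz : (orthoPoly b c (n + 1)).IsRoot z) :
    C ((orthoPoly b c n).eval z) * orthoPoly b c (n + 1) = (X - C z) * kernelPoly b c z n := by
  simpa [hz.eq_zero] using christoffel_darboux b c z n

theorem rootMultiplicity_orthoPoly_succ_eq_one (hz : (orthoPoly b c (n + 1)).IsRoot z)
    (hK : (kernelPoly b c z n).eval z ≠ 0) :
    (orthoPoly b c (n + 1)).rootMultiplicity z = 1 := by
  have hderiv : (orthoPoly b c n).eval z * (derivative (orthoPoly b c (n + 1))).eval z =
      (kernelPoly b c z n).eval z := by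
    simpa using congr_arg (fun p ↦ (derivative p).eval z) (mul_orthoPoly_succ_of_isRoot hz)
  have hsimple : (derivative (orthoPoly b c (n + 1))).eval z ≠ 0 :=
    right_ne_zero_of_mul (hderiv ▸ hK)
  have hne : orthoPoly b c (n + 1) ≠ 0 := fun h ↦ hsimple (by simp [h])
  exact le_antisymm
    (not_lt.1 fun h ↦ hsimple ((one_lt_rootMultiplicity_iff_isRoot hne).1 h).2)
    ((rootMultiplicity_pos hne).2 hz)

theorem eval_star_orthoPoly [StarRing R] (hb : ∀ n, IsSelfAdjoint (b n))
    (hc : ∀ n, IsSelfAdjoint (c n)) (z : R) (n : ℕ) :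
    (orthoPoly b c n).eval (star z) = star ((orthoPoly b c n).eval z) := by
  induction n using Nat.twoStepInduction with
  | zero => simp [orthoPoly]
  | one => simp [orthoPoly, (hb 0).star_eq]
  | more n ih₀ ih₁ => simp [orthoPoly, ih₀, ih₁, (hb _).star_eq, (hc _).star_eq]

end CommRing

section StarOrderedRing

variable {R : Type*} [CommRing R] [PartialOrder R] [StarRing R] [StarOrderedRing R]
  [IsStrictOrderedRing R] {b c : ℕ → R} {z : R} {n : ℕ}

theorem eval_star_kernelPoly_pos (hb : ∀ n, IsSelfAdjoint (b n)) (hc : ∀ n, 0 < c n) (z : R)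
    (n : ℕ) : 0 < (kernelPoly b c z n).eval (star z) := by
  induction n with
  | zero => simp [kernelPoly]
  | succ n ih =>
    have hstar := eval_star_orthoPoly hb (fun n ↦ (hc n).le.isSelfAdjoint) z (n + 1)
    simp only [kernelPoly, eval_add, eval_mul, eval_C, hstar]
    exact add_pos_of_nonneg_of_pos (mul_star_self_nonneg _) (mul_pos (hc n) ih)

theorem isSelfAdjoint_of_isRoot_orthoPoly [NoZeroDivisors R] (hb : ∀ n, IsSelfAdjoint (b n))
    (hc : ∀ n, 0 < c n) (hz : (orthoPoly b c n).IsRoot z) : IsSelfAdjoint z := by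
  cases n with
  | zero => simp [orthoPoly] at hz
  | succ n =>
    have hstar : (orthoPoly b c (n + 1)).eval (star z) = 0 := by
      rw [eval_star_orthoPoly hb (fun n ↦ (hc n).le.isSelfAdjoint), hz.eq_zero, star_zero]
    have hprod : (star z - z) * (kernelPoly b c z n).eval (star z) = 0 := by
      simpa [hstar] using (congr_arg (eval (star z)) (mul_orthoPoly_succ_of_isRoot hz)).symm
    exact sub_eq_zero.1 <|
      (mul_eq_zero.1 hprod).resolve_right (eval_star_kernelPoly_pos hb hc z n).ne'

theorem rootMultiplicity_orthoPoly_eq_one [NoZeroDivisors R] (hb : ∀ n, IsSelfAdjoint (b n))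
    (hc : ∀ n, 0 < c n) (hz : (orthoPoly b c n).IsRoot z) :
    (orthoPoly b c n).rootMultiplicity z = 1 := by
  have hstar : star z = z := isSelfAdjoint_of_isRoot_orthoPoly hb hc hz
  cases n with
  | zero => simp [orthoPoly] at hz
  | succ n =>
    have hpos := eval_star_kernelPoly_pos hb hc z n
    rw [hstar] at hpos
    exact rootMultiplicity_orthoPoly_succ_eq_one hz hpos.ne'

end StarOrderedRing

/-- The diagonal `(μ, -μ, -μ, …)` of the Jacobi matrix whose orthogonal polynomials are, up to
sign, the `Gpoly μ k`; its off-diagonal products are all `4`. -/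
def gDiagonal (μ : ℝ) : ℕ → ℂ
  | 0 => μ
  | _ + 1 => -μ

theorem isSelfAdjoint_gDiagonal (μ : ℝ) (n : ℕ) : IsSelfAdjoint (gDiagonal μ n) := by
  cases n with
  | zero => exact Complex.conj_ofReal μ
  | succ n => exact IsSelfAdjoint.neg (Complex.conj_ofReal μ)

theorem Gpoly_eq_C_mul_orthoPoly (μ : ℝ) (k : ℕ) :
    Gpoly μ k = C ((-1) ^ k) * orthoPoly (gDiagonal μ) (fun _ ↦ 4) k := by
  induction k using Nat.twoStepInduction with
  | zero => simp [Gpoly, orthoPoly]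
  | one => simp [Gpoly, orthoPoly, gDiagonal]
  | more k ih₀ ih₁ =>
    simp only [Gpoly, orthoPoly, gDiagonal, ih₀, ih₁, C_neg, C_pow, C_1, C_ofNat]
    ring

open scoped ComplexOrder

theorem G_roots_real_simple (μ : ℝ) (k : ℕ) (hk : 1 ≤ k) (z : ℂ)
    (hz : (Gpoly μ k).IsRoot z) :
    z.im = 0 ∧ (Gpoly μ k).rootMultiplicity z = 1 := by
  have hb := isSelfAdjoint_gDiagonal μ
  have hc : ∀ _ : ℕ, (0 : ℂ) < 4 := fun _ ↦ by norm_num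
  rw [Gpoly_eq_C_mul_orthoPoly] at hz ⊢
  have hroot : (orthoPoly (gDiagonal μ) (fun _ ↦ 4) k).IsRoot z := by simpa using hz
  refine ⟨Complex.conj_eq_iff_im.1 (isSelfAdjoint_of_isRoot_orthoPoly hb hc hroot), ?_⟩
  rw [← count_roots, roots_C_mul _ (by simp), count_roots]
  exact rootMultiplicity_orthoPoly_eq_one hb hc hroot
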